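/- Let n be a nonnegative integer and let i, j, s be natural numbers with i < j ≤ s-1, n = j-i even, m = n/2. Then the hypergeometric sum ∑_{ℓ=0}^{n} [(i-j)_ℓ (-s)_ℓ (-i-j-1)_ℓ] / [(-2s)_ℓ (-j)_ℓ ℓ!] equals [n!/m!] · [s!/(s-m)!] · (s-j) · [(s-1-(i+j)/2)!/(s-j)!] · [(2s-j+i)!/(2s)!] · [((i+j)/2)!/j!] (Watson's formula specialization); if n = j-i is odd, the sum equals 0. -/

import Mathlib

/-- The rising factorial (Pochhammer symbol) `(x)_n = x (x+1) ⋯ (x+n-1)`. -/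
noncomputable def risingFactorial (x : ℝ) (n : ℕ) : ℝ :=
  ∏ k ∈ Finset.range n, (x + k)

theorem risingFactorial_succ (x : ℝ) (n : ℕ) :
    risingFactorial x (n + 1) = risingFactorial x n * (x + n) :=
  Finset.prod_range_succ _ _

theorem mul_risingFactorial_add_one (x : ℝ) (n : ℕ) :
    x * risingFactorial (x + 1) n = risingFactorial x n * (x + n) := by
  induction n with
  | zero => simp [risingFactorial]
  | succ n ih =>
    rw [risingFactorial_succ, risingFactorial_succ, ← mul_assoc, ih]
    push_cast
    ring

theorem risingFactorial_neg_natCast_ne_zero {a n : ℕ} (h : n ≤ a) :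
    risingFactorial (-(a : ℝ)) n ≠ 0 := by
  refine Finset.prod_ne_zero_iff.mpr fun k hk hzero => ?_
  have hcast : (k : ℝ) = a := by linarith
  have := Finset.mem_range.mp hk
  have : k = a := by exact_mod_cast hcast
  omega

/-- The `ℓ`-th term of Watson's series with numerator parameters `-n, -s, -(2i+n+1)` and
denominator parameters `-2s, -(i+n)`. -/
noncomputable def watsonTerm (n i s ℓ : ℕ) : ℝ :=
  risingFactorial (-(n : ℝ)) ℓ * risingFactorial (-(s : ℝ)) ℓ *
      risingFactorial (-(2 * i + n + 1 : ℝ)) ℓ /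
    (risingFactorial (-(2 * s : ℝ)) ℓ * risingFactorial (-(i + n : ℝ)) ℓ *
      (Nat.factorial ℓ : ℝ))

theorem watsonTerm_succ {n i s ℓ : ℕ} :
    watsonTerm n i s (ℓ + 1) = watsonTerm n i s ℓ *
      (((ℓ : ℝ) - n) * (ℓ - s) * (ℓ - (2 * i + n + 1)) /
        ((ℓ - 2 * s) * (ℓ - (i + n)) * (ℓ + 1))) := by
  simp only [watsonTerm, risingFactorial_succ, Nat.factorial_succ]
  rw [div_mul_div_comm]
  push_cast
  congr 1 <;> ring

theorem watsonTerm_contiguous {n i s ℓ : ℕ} (hℓ : ℓ ≤ n + 1) (hs : i + n + 2 < s) :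
    watsonTerm n (i + 1) s ℓ = watsonTerm (n + 2) i s ℓ *
      (((n : ℝ) + 2 - ℓ) * (n + 1 - ℓ) * (i + n + 2) /
        ((n + 2) * (n + 1) * (i + n + 2 - ℓ))) := by
  have hn : (n + 2 : ℝ) * (n + 1) * risingFactorial (-(n : ℝ)) ℓ =
      (n + 2 - ℓ) * (n + 1 - ℓ) * risingFactorial (-(n + 2 : ℝ)) ℓ := by
    have h₁ := mul_risingFactorial_add_one (-(n + 2 : ℝ)) ℓ
    have h₂ := mul_risingFactorial_add_one (-(n + 1 : ℝ)) ℓ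
    rw [show -(n + 2 : ℝ) + 1 = -(n + 1) by ring] at h₁
    rw [show -(n + 1 : ℝ) + 1 = -n by ring] at h₂
    linear_combination (-(n + 2 : ℝ)) * h₂ - (n + 1 - ℓ : ℝ) * h₁
  have hj : (i + n + 2 : ℝ) * risingFactorial (-(i + n + 1 : ℝ)) ℓ =
      (i + n + 2 - ℓ) * risingFactorial (-(i + n + 2 : ℝ)) ℓ := by
    have h := mul_risingFactorial_add_one (-(i + n + 2 : ℝ)) ℓ
    rw [show -(i + n + 2 : ℝ) + 1 = -(i + n + 1) by ring] at h
    linear_combination -h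
  have hA : risingFactorial (-(i + n + 1 : ℝ)) ℓ ≠ 0 := by
    have := risingFactorial_neg_natCast_ne_zero (show ℓ ≤ i + n + 1 by omega)
    push_cast at this
    exact this
  have hB : risingFactorial (-(i + n + 2 : ℝ)) ℓ ≠ 0 := by
    have := risingFactorial_neg_natCast_ne_zero (show ℓ ≤ i + n + 2 by omega)
    push_cast at this
    exact this
  have hC : risingFactorial (-(2 * s : ℝ)) ℓ ≠ 0 := by
    have := risingFactorial_neg_natCast_ne_zero (show ℓ ≤ 2 * s by omega)
    push_cast at this
    exact this
  have hfac : (Nat.factorial ℓ : ℝ) ≠ 0 := by positivity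
  have hℓ' : (ℓ : ℝ) ≤ n + 1 := by exact_mod_cast hℓ
  have hD : (i + n + 2 - ℓ : ℝ) ≠ 0 := by
    have : (0 : ℝ) ≤ i := by positivity
    intro h
    linarith
  have hn₁ : (n + 1 : ℝ) ≠ 0 := by positivity
  have hn₂ : (n + 2 : ℝ) ≠ 0 := by positivity
  have hn' := eq_div_of_mul_eq (mul_ne_zero hn₂ hn₁) ((mul_comm _ _).trans hn)
  have hE : (i + n + 2 : ℝ) ≠ 0 := by positivity
  have hj' := eq_div_of_mul_eq hE ((mul_comm _ _).trans hj)
  simp only [watsonTerm]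
  push_cast
  rw [show -((i : ℝ) + 1 + n) = -(i + n + 1) by ring,
    show -((i : ℝ) + (n + 2)) = -(i + n + 2) by ring,
    show -(2 * ((i : ℝ) + 1) + n + 1) = -(2 * i + (n + 2) + 1) by ring, hn', hj']
  field_simp

/-- The ratio of Watson's sums for `(n + 2, i)` and `(n, i + 1)`. -/
noncomputable def watsonRatio (n i s : ℕ) : ℝ :=
  (n + 1) * (s - (i + n + 2)) / ((2 * s - n - 1) * (i + n + 2))

theorem sum_watsonTerm_telescope {n i s L : ℕ} (hL : L ≤ n + 2) (hs : i + n + 2 < s) :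
    ∑ ℓ ∈ Finset.range L, (watsonTerm (n + 2) i s ℓ -
        watsonRatio n i s * watsonTerm n (i + 1) s ℓ) =
      L * (L - 2 * s - 1) / ((n + 2) * (2 * s - n - 1)) * watsonTerm (n + 2) i s L := by
  induction L with
  | zero => simp
  | succ L ih =>
    rw [Finset.sum_range_succ, ih (by omega), watsonTerm_contiguous (by omega) hs,
      watsonTerm_succ, watsonRatio]
    have hL' : (L : ℝ) ≤ n + 1 := by exact_mod_cast (by omega : L ≤ n + 1)
    have hs' : (i + n + 2 : ℝ) < s := by exact_mod_cast hs
    have hi : (0 : ℝ) ≤ i := by positivity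
    have hn : (0 : ℝ) ≤ n := by positivity
    have h₁ : (2 * s - n - 1 : ℝ) ≠ 0 := by intro h; linarith
    have h₂ : (L - 2 * s : ℝ) ≠ 0 := by intro h; linarith
    have h₃ : (i + n + 2 - L : ℝ) ≠ 0 := by intro h; linarith
    have h₄ : (L + 1 : ℝ) ≠ 0 := by positivity
    have h₅ : (n + 1 : ℝ) ≠ 0 := by positivity
    have h₆ : (n + 2 : ℝ) ≠ 0 := by positivity
    have h₇ : (i + n + 2 : ℝ) ≠ 0 := by positivity
    push_cast
    rw [show (L : ℝ) - (i + (n + 2)) = -(i + n + 2 - L) by ring,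
      show (L : ℝ) + 1 - 2 * s - 1 = L - 2 * s by ring]
    field_simp
    ring

theorem watsonTerm_eq_zero {n i s ℓ : ℕ} (h : n < ℓ) : watsonTerm n i s ℓ = 0 := by
  have : risingFactorial (-(n : ℝ)) ℓ = 0 :=
    Finset.prod_eq_zero (Finset.mem_range.mpr h) (by simp)
  simp [watsonTerm, this]

theorem sum_watsonTerm_add_two {n i s : ℕ} (hs : i + n + 2 < s) :
    ∑ ℓ ∈ Finset.range (n + 2 + 1), watsonTerm (n + 2) i s ℓ =
      watsonRatio n i s * ∑ ℓ ∈ Finset.range (n + 1), watsonTerm n (i + 1) s ℓ := by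
  have h := sum_watsonTerm_telescope le_rfl hs
  rw [Finset.sum_sub_distrib, ← Finset.mul_sum,
    Finset.sum_range_succ (watsonTerm n (i + 1) s) (n + 1),
    watsonTerm_eq_zero (Nat.lt_succ_self n), add_zero] at h
  rw [Finset.sum_range_succ]
  have hs' : (i + n + 2 : ℝ) < s := by exact_mod_cast hs
  have hi : (0 : ℝ) ≤ i := by positivity
  have hn : (0 : ℝ) ≤ n := by positivity
  have h₁ : (2 * s - n - 1 : ℝ) ≠ 0 := by intro h; linarith
  have h₆ : (n + 2 : ℝ) ≠ 0 := by positivity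
  have hcoeff : ((n + 2 : ℕ) : ℝ) * ((n + 2 : ℕ) - 2 * s - 1) /
      ((n + 2) * (2 * s - n - 1)) = -1 := by
    push_cast
    field_simp
    ring
  rw [hcoeff] at h
  linarith

theorem sum_watsonTerm_odd (m i s : ℕ) (hs : i + (2 * m + 1) < s) :
    ∑ ℓ ∈ Finset.range (2 * m + 1 + 1), watsonTerm (2 * m + 1) i s ℓ = 0 := by
  induction m generalizing i with
  | zero =>
    have hs' : (s : ℝ) ≠ 0 := by
      have : s ≠ 0 := by omega
      exact_mod_cast this
    have hi : (i + 1 : ℝ) ≠ 0 := by positivity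
    have hterm : watsonTerm 1 i s 0 = 1 := by simp [watsonTerm, risingFactorial]
    rw [Finset.sum_range_succ, Finset.sum_range_one, Nat.mul_zero, Nat.zero_add,
      watsonTerm_succ, hterm]
    push_cast
    rw [show (0 : ℝ) - (i + 1) = -(i + 1) by ring, show (0 : ℝ) - 2 * s = -(2 * s) by ring]
    field_simp
    ring
  | succ m ih =>
    have h := sum_watsonTerm_add_two (n := 2 * m + 1) (i := i) (s := s) (by omega)
    rw [ih (i + 1) (by omega), mul_zero] at h
    exact h

theorem sum_watsonTerm_even (m i s : ℕ) (hs : i + 2 * m < s) :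
    ∑ ℓ ∈ Finset.range (2 * m + 1), watsonTerm (2 * m) i s ℓ =
      ((Nat.factorial (2 * m) : ℝ) / (Nat.factorial m : ℝ)) *
        ((Nat.factorial s : ℝ) / (Nat.factorial (s - m) : ℝ)) *
        ((s : ℝ) - (i + 2 * m)) *
        ((Nat.factorial (s - 1 - (i + m)) : ℝ) / (Nat.factorial (s - (i + 2 * m)) : ℝ)) *
        ((Nat.factorial (2 * s - 2 * m) : ℝ) / (Nat.factorial (2 * s) : ℝ)) *
        ((Nat.factorial (i + m) : ℝ) / (Nat.factorial (i + 2 * m) : ℝ)) := by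
  induction m generalizing i with
  | zero =>
    obtain ⟨k, rfl⟩ := Nat.exists_eq_add_of_lt hs
    rw [show i + 2 * 0 + k + 1 - (i + 2 * 0) = k + 1 by omega,
      show i + 2 * 0 + k + 1 - 1 - (i + 0) = k by omega, Nat.factorial_succ k]
    have hk : (k + 1 : ℝ) ≠ 0 := by positivity
    simp [watsonTerm, risingFactorial]
    field_simp
    ring
  | succ m ih =>
    have h := sum_watsonTerm_add_two (n := 2 * m) (i := i) (s := s) (by omega)
    rw [ih (i + 1) (by omega)] at h
    rw [show 2 * (m + 1) = 2 * m + 2 by ring, h]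
    obtain ⟨k, rfl⟩ := Nat.exists_eq_add_of_lt hs
    rw [show i + 2 * (m + 1) + k + 1 - m = i + m + k + 2 + 1 by omega,
      show i + 2 * (m + 1) + k + 1 - (m + 1) = i + m + k + 2 by omega,
      show i + 2 * (m + 1) + k + 1 - 1 - (i + 1 + m) = m + k + 1 by omega,
      show i + 2 * (m + 1) + k + 1 - 1 - (i + (m + 1)) = m + k + 1 by omega,
      show i + 2 * (m + 1) + k + 1 - (i + 1 + 2 * m) = k + 1 + 1 by omega,
      show i + 2 * (m + 1) + k + 1 - (i + (2 * m + 2)) = k + 1 by omega,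
      show 2 * (i + 2 * (m + 1) + k + 1) - 2 * m = 2 * i + 2 * m + 2 * k + 4 + 1 + 1 by omega,
      show 2 * (i + 2 * (m + 1) + k + 1) - (2 * m + 2) = 2 * i + 2 * m + 2 * k + 4 by omega,
      show i + 1 + 2 * m = i + 2 * m + 1 by ring,
      show i + (2 * m + 2) = i + 2 * m + 1 + 1 by ring,
      show i + 1 + m = i + (m + 1) by ring,
      Nat.factorial_succ (i + m + k + 2), Nat.factorial_succ (k + 1),
      Nat.factorial_succ (2 * i + 2 * m + 2 * k + 4 + 1),
      Nat.factorial_succ (2 * i + 2 * m + 2 * k + 4),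
      Nat.factorial_succ (i + 2 * m + 1), Nat.factorial_succ (2 * m + 1),
      Nat.factorial_succ (2 * m), Nat.factorial_succ m, watsonRatio]
    have h₁ : (2 * i + 2 * m + 2 * k + 5 : ℝ) ≠ 0 := by positivity
    have h₂ : (i + m + k + 3 : ℝ) ≠ 0 := by positivity
    have h₃ : (k + 2 : ℝ) ≠ 0 := by positivity
    have h₄ : (i + 2 * m + 2 : ℝ) ≠ 0 := by positivity
    have h₅ : (m + 1 : ℝ) ≠ 0 := by positivity
    push_cast
    rw [show (2 * (i + 2 * (m + 1) + k + 1) - 2 * m - 1 : ℝ) = 2 * i + 2 * m + 2 * k + 5 by ring,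
      show (i + m + k + 2 + 1 : ℝ) = i + m + k + 3 by ring,
      show (k + 1 + 1 : ℝ) = k + 2 by ring,
      show (i + 2 * m + 1 + 1 : ℝ) = i + 2 * m + 2 by ring]
    field_simp
    ring

/-- Watson's formula specialization: for `0 ≤ i < j ≤ s-1`, the hypergeometric sum
`∑_{ℓ=0}^{j-i} (i-j)_ℓ (-s)_ℓ (-i-j-1)_ℓ / ((-2s)_ℓ (-j)_ℓ ℓ!)` equals
`(n!/m!)(s!/(s-m)!)(s-j)((s-1-(i+j)/2)!/(s-j)!)((2s-j+i)!/(2s)!)(((i+j)/2)!/j!)` with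
`n = j-i`, `m = n/2` when `n` is even, and equals `0` when `n` is odd. -/
theorem watson_specialization (i j s : ℕ) (hij : i < j) (hj : j ≤ s - 1) (hs : 2 ≤ s) :
    (Even (j - i) →
      ∑ ℓ ∈ Finset.range (j - i + 1),
          risingFactorial ((i : ℝ) - j) ℓ * risingFactorial (-(s : ℝ)) ℓ *
              risingFactorial (-(i : ℝ) - j - 1) ℓ /
            (risingFactorial (-(2 * s : ℝ)) ℓ * risingFactorial (-(j : ℝ)) ℓ *
              (Nat.factorial ℓ : ℝ)) =
        ((Nat.factorial (j - i) : ℝ) / (Nat.factorial ((j - i) / 2) : ℝ)) *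
          ((Nat.factorial s : ℝ) / (Nat.factorial (s - (j - i) / 2) : ℝ)) *
          ((s : ℝ) - (j : ℝ)) *
          ((Nat.factorial (s - 1 - (i + j) / 2) : ℝ) / (Nat.factorial (s - j) : ℝ)) *
          ((Nat.factorial (2 * s - j + i) : ℝ) / (Nat.factorial (2 * s) : ℝ)) *
          ((Nat.factorial ((i + j) / 2) : ℝ) / (Nat.factorial j : ℝ))) ∧
    (Odd (j - i) →
      ∑ ℓ ∈ Finset.range (j - i + 1),
          risingFactorial ((i : ℝ) - j) ℓ * risingFactorial (-(s : ℝ)) ℓ *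
              risingFactorial (-(i : ℝ) - j - 1) ℓ /
            (risingFactorial (-(2 * s : ℝ)) ℓ * risingFactorial (-(j : ℝ)) ℓ *
              (Nat.factorial ℓ : ℝ)) = 0) := by
  obtain ⟨n, rfl⟩ := Nat.exists_eq_add_of_le hij.le
  have hsum : ∑ ℓ ∈ Finset.range (i + n - i + 1),
      risingFactorial ((i : ℝ) - (i + n : ℕ)) ℓ * risingFactorial (-(s : ℝ)) ℓ *
          risingFactorial (-(i : ℝ) - (i + n : ℕ) - 1) ℓ /
        (risingFactorial (-(2 * s : ℝ)) ℓ * risingFactorial (-((i + n : ℕ) : ℝ)) ℓ *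
          (Nat.factorial ℓ : ℝ)) = ∑ ℓ ∈ Finset.range (n + 1), watsonTerm n i s ℓ := by
    rw [Nat.add_sub_cancel_left]
    refine Finset.sum_congr rfl fun ℓ _ => ?_
    rw [watsonTerm]
    push_cast
    rw [show (i : ℝ) - (i + n) = -n by ring,
      show -(i : ℝ) - (i + n) - 1 = -(2 * i + n + 1) by ring]
  rw [hsum, Nat.add_sub_cancel_left]
  constructor
  · intro h
    obtain ⟨m, rfl⟩ := even_iff_exists_two_mul.mp h
    rw [sum_watsonTerm_even m i s (by omega), show 2 * m / 2 = m by omega,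
      show (i + (i + 2 * m)) / 2 = i + m by omega,
      show 2 * s - (i + 2 * m) + i = 2 * s - 2 * m by omega]
    push_cast
    rfl
  · rintro ⟨m, rfl⟩
    exact sum_watsonTerm_odd m i s (by omega)
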